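/- For an index set I, the wedge of circles realization |Γ| of the Top-graph Γ with a single vertex and discrete edge space I has fundamental group isomorphic (as a group) to the free group on I. -/

import Mathlib

universe u

/-- A point of `(I × [0,1]) ⊕ {v}` is a "vertex point" if it is the added vertex or an
endpoint of an edge. -/
def IsVertexPoint {I : Type u} : (I × unitInterval) ⊕ PUnit.{u+1} → Prop
  | Sum.inl p => p.2 = 0 ∨ p.2 = 1
  | Sum.inr _ => True

/-- The setoid realizing the wedge of circles indexed by `I`: all endpoints of the
intervals `{i} × [0,1]` and the extra vertex are identified to a single point. -/
def wedgeCirclesSetoid (I : Type u) : Setoid ((I × unitInterval) ⊕ PUnit.{u+1}) where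
  r a b := a = b ∨ (IsVertexPoint a ∧ IsVertexPoint b)
  iseqv := by
    constructor
    · exact fun a => Or.inl rfl
    · rintro a b (rfl | h)
      · exact Or.inl rfl
      · exact Or.inr ⟨h.2, h.1⟩
    · rintro a b c (rfl | h) (rfl | h')
      · exact Or.inl rfl
      · exact Or.inr h'
      · exact Or.inr h
      · exact Or.inr ⟨h.1, h'.2⟩

/-- The geometric realization of the `Top`-graph with one vertex and discrete edge
space `I`: the wedge of circles indexed by `I`, with the quotient topology. -/
def WedgeCircles (I : Type u) : Type u := Quotient (wedgeCirclesSetoid I)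

instance (I : Type u) [TopologicalSpace I] [DiscreteTopology I] :
    TopologicalSpace (WedgeCircles I) :=
  instTopologicalSpaceQuotient

/-- The basepoint (the unique vertex) of the wedge of circles. -/
def wedgeCirclesBase (I : Type u) : WedgeCircles I :=
  Quotient.mk (wedgeCirclesSetoid I) (Sum.inr PUnit.unit)


open Topology

set_option linter.unusedSectionVars false

namespace WC

variable {I : Type u}

/-- The quotient map. -/
def mk : (I × unitInterval) ⊕ PUnit.{u+1} → WedgeCircles I := Quotient.mk (wedgeCirclesSetoid I)

/-- Descend a function to the wedge. -/
def desc {Y : Type*} (y : Y) (f : I → unitInterval → Y) (h0 : ∀ i, f i 0 = y)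
    (h1 : ∀ i, f i 1 = y) : WedgeCircles I → Y :=
  Quotient.lift (s := wedgeCirclesSetoid I) (Sum.elim (fun p => f p.1 p.2) (fun _ => y)) (by
    have key : ∀ a : (I × unitInterval) ⊕ PUnit.{u+1}, IsVertexPoint a →
        Sum.elim (fun p : I × unitInterval => f p.1 p.2) (fun _ => y) a = y := by
      rintro (⟨i, t⟩ | a) h
      · rcases h with h | h
        · simp only [] at h; subst h; exact h0 i
        · simp only [] at h; subst h; exact h1 i
      · rfl
    rintro a b (rfl | ⟨ha, hb⟩)
    · rfl
    · rw [key a ha, key b hb])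

/-- The characteristic map of an edge, as a function. -/
def edge (i : I) (t : unitInterval) : WedgeCircles I := mk (Sum.inl (i, t))

@[simp] lemma desc_base {Y : Type*} (y : Y) (f : I → unitInterval → Y) (h0 : ∀ i, f i 0 = y)
    (h1 : ∀ i, f i 1 = y) : desc y f h0 h1 (wedgeCirclesBase I) = y := rfl

@[simp] lemma desc_edge {Y : Type*} (y : Y) (f : I → unitInterval → Y) (h0 : ∀ i, f i 0 = y)
    (h1 : ∀ i, f i 1 = y) (i : I) (t : unitInterval) : desc y f h0 h1 (edge i t) = f i t := rfl

lemma edge_zero (i : I) : edge i 0 = wedgeCirclesBase I :=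
  Quotient.sound (s := wedgeCirclesSetoid I) (Or.inr ⟨Or.inl rfl, trivial⟩)

lemma edge_one (i : I) : edge i 1 = wedgeCirclesBase I :=
  Quotient.sound (s := wedgeCirclesSetoid I) (Or.inr ⟨Or.inr rfl, trivial⟩)

lemma cases (x : WedgeCircles I) : x = wedgeCirclesBase I ∨
    ∃ (i : I) (t : unitInterval), 0 < (t : ℝ) ∧ (t : ℝ) < 1 ∧ x = edge i t := by
  obtain ⟨a, rfl⟩ := Quotient.exists_rep (s := wedgeCirclesSetoid I) x
  rcases a with ⟨i, t⟩ | a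
  · by_cases h0 : t = 0
    · subst h0; exact Or.inl (edge_zero i)
    by_cases h1 : t = 1
    · subst h1; exact Or.inl (edge_one i)
    refine Or.inr ⟨i, t, ?_, ?_, rfl⟩
    · exact lt_of_le_of_ne t.2.1 (fun h => h0 (Subtype.ext h.symm))
    · exact lt_of_le_of_ne t.2.2 (fun h => h1 (Subtype.ext h))
  · exact Or.inl rfl

variable [TopologicalSpace I] [DiscreteTopology I]

lemma isQuotientMap_mk : IsQuotientMap (mk (I := I)) := isQuotientMap_quot_mk

lemma isOpen_prod_iff' {s : Set (I × unitInterval)} :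
    IsOpen s ↔ ∀ i, IsOpen {t | (i, t) ∈ s} := by
  constructor
  · intro h i
    exact h.preimage (by fun_prop : Continuous fun t : unitInterval => (i, t))
  · intro h
    have : s = ⋃ i, ({i} : Set I) ×ˢ {t | (i, t) ∈ s} := by
      ext ⟨i, t⟩; simp
    rw [this]
    exact isOpen_iUnion fun i => (isOpen_discrete _).prod (h i)

lemma isOpen_iff {U : Set (WedgeCircles I)} : IsOpen U ↔ ∀ i, IsOpen {t | edge i t ∈ U} := by
  rw [← isQuotientMap_mk.isOpen_preimage, isOpen_sum_iff, isOpen_prod_iff']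
  constructor
  · intro h; exact h.1
  · intro h; exact ⟨h, isOpen_discrete _⟩

lemma continuous_edge (i : I) : Continuous (edge i) := by
  refine isQuotientMap_mk.continuous.comp ?_
  fun_prop

lemma continuous_desc {Y : Type*} [TopologicalSpace Y] (y : Y) (f : I → unitInterval → Y)
    (h0 : ∀ i, f i 0 = y) (h1 : ∀ i, f i 1 = y) (h : ∀ i, Continuous (f i)) :
    Continuous (desc y f h0 h1) := by
  rw [continuous_def]
  intro s hs
  rw [isOpen_iff]
  intro i
  exact hs.preimage (h i)

/-- The loop around an edge. -/
def loop (i : I) : Path (wedgeCirclesBase I) (wedgeCirclesBase I) where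
  toFun := edge i
  continuous_toFun := continuous_edge i
  source' := edge_zero i
  target' := edge_one i

/-- The edge as continuous map. -/
def edgeC (i : I) : C(unitInterval, WedgeCircles I) := ⟨edge i, continuous_edge i⟩

/-- neighbourhood of the vertex -/
def U0 (I : Type u) : Set (WedgeCircles I) :=
  {x | desc True (fun _ t => (t : ℝ) < 1/4 ∨ 3/4 < (t : ℝ)) (by simp)
    (by intro; simp; norm_num) x}

/-- complement of the vertex -/
def U1 (I : Type u) : Set (WedgeCircles I) :=
  {x | desc False (fun _ t => 0 < (t : ℝ) ∧ (t : ℝ) < 1) (by simp) (by simp) x}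

@[simp] lemma base_mem_U0 : wedgeCirclesBase I ∈ U0 I := trivial
@[simp] lemma edge_mem_U0 (i : I) (t : unitInterval) :
    edge i t ∈ U0 I ↔ ((t : ℝ) < 1/4 ∨ 3/4 < (t : ℝ)) := Iff.rfl
@[simp] lemma base_mem_U1 : wedgeCirclesBase I ∉ U1 I := fun h => h
@[simp] lemma edge_mem_U1 (i : I) (t : unitInterval) :
    edge i t ∈ U1 I ↔ (0 < (t : ℝ) ∧ (t : ℝ) < 1) := Iff.rfl

lemma isOpen_ltc (c : ℝ) : IsOpen {t : unitInterval | (t : ℝ) < c} :=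
  isOpen_lt continuous_subtype_val continuous_const

lemma isOpen_gtc (c : ℝ) : IsOpen {t : unitInterval | c < (t : ℝ)} :=
  isOpen_lt continuous_const continuous_subtype_val

lemma isOpen_U0 : IsOpen (U0 I) := by
  rw [isOpen_iff]; intro i
  exact (isOpen_ltc _).union (isOpen_gtc _)

lemma isOpen_U1 : IsOpen (U1 I) := by
  rw [isOpen_iff]; intro i
  exact (isOpen_gtc _).inter (isOpen_ltc _)

lemma mem_U0_or (x : WedgeCircles I) : x ∈ U0 I ∨ x ∈ U1 I := by
  rcases cases x with rfl | ⟨i, t, h0, h1, rfl⟩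
  · left; simp
  · right; simp [h0, h1]

instance : TopologicalSpace (FreeGroup I) := ⊥
instance : DiscreteTopology (FreeGroup I) := ⟨rfl⟩

open Classical in
/-- the transition function -/
noncomputable def k : WedgeCircles I → FreeGroup I :=
  desc 1 (fun i t => if (t : ℝ) < 1/2 ∨ t = 1 then 1 else FreeGroup.of i) (by simp) (by simp)

lemma k_edge_lt (i : I) (t : unitInterval) (h : (t : ℝ) < 1/2) : k (edge i t) = 1 := by
  simp only [k, desc_edge]; rw [if_pos (Or.inl h)]

lemma k_edge_ge (i : I) (t : unitInterval) (h : 1/2 ≤ (t : ℝ)) (h' : (t : ℝ) < 1) :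
    k (edge i t) = FreeGroup.of i := by
  simp only [k, desc_edge]
  rw [if_neg]
  rintro (h1 | rfl)
  · linarith
  · simp at h'

lemma continuousOn_k : ContinuousOn (k (I := I)) (U0 I ∩ U1 I) := by
  rw [continuousOn_open_iff (isOpen_U0.inter isOpen_U1)]
  intro T _
  rw [isOpen_iff]
  intro i
  have : {t : unitInterval | edge i t ∈ U0 I ∩ U1 I ∩ k ⁻¹' T} =
      ({t : unitInterval | (t : ℝ) < 1/4} ∩ {t : unitInterval | 0 < (t : ℝ)} ∩ {_t | 1 ∈ T}) ∪
      ({t : unitInterval | 3/4 < (t : ℝ)} ∩ {t : unitInterval | (t : ℝ) < 1} ∩ {_t | FreeGroup.of i ∈ T}) := by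
    ext t
    simp only [Set.mem_ofPred_eq, Set.mem_inter_iff, edge_mem_U0, edge_mem_U1, Set.mem_preimage,
      Set.mem_union]
    constructor
    · rintro ⟨⟨h | h, h0, h1⟩, hT⟩
      · rw [k_edge_lt i t (by linarith)] at hT; exact Or.inl ⟨⟨h, h0⟩, hT⟩
      · rw [k_edge_ge i t (by linarith) h1] at hT; exact Or.inr ⟨⟨h, h1⟩, hT⟩
    · rintro (⟨⟨h, h0⟩, hT⟩ | ⟨⟨h, h0⟩, hT⟩)
      · rw [k_edge_lt i t (by linarith)]; exact ⟨⟨Or.inl h, h0, by linarith⟩, hT⟩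
      · rw [k_edge_ge i t (by linarith) h0]; exact ⟨⟨Or.inr h, by linarith, h0⟩, hT⟩
  rw [this]
  refine IsOpen.union (.inter (.inter ?_ ?_) isOpen_const) (.inter (.inter ?_ ?_) isOpen_const)
  all_goals first | exact isOpen_ltc _ | exact isOpen_gtc _

/-- chart transition -/
noncomputable def K (b : Bool) (x : WedgeCircles I) : FreeGroup I := if b then k x else 1

open Classical in
/-- The covering space. -/
noncomputable def core (I : Type u) [TopologicalSpace I] [DiscreteTopology I] :
    FiberBundleCore Bool (WedgeCircles I) (FreeGroup I) where
  baseSet b := if b then U1 I else U0 I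
  isOpen_baseSet b := by cases b <;> simp [isOpen_U0, isOpen_U1]
  indexAt x := if x ∈ U0 I then false else true
  mem_baseSet_at x := by
    by_cases h : x ∈ U0 I
    · simp [h]
    · simp [h, (mem_U0_or x).resolve_left h]
  coordChange i j x f := (K j x)⁻¹ * K i x * f
  coordChange_self := by simp
  continuousOn_coordChange i j := by
    have hk : ∀ s : Set (WedgeCircles I), s ⊆ U0 I ∩ U1 I →
        ContinuousOn (fun p : WedgeCircles I × FreeGroup I => k p.1) (s ×ˢ Set.univ) := by
      intro s hs
      exact (continuousOn_k.mono hs).comp continuousOn_fst (fun p hp => hp.1)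
    cases i <;> cases j
    · simp only [K]; simp; fun_prop
    · simp only [K, if_true, Bool.false_eq_true, if_false, mul_one]
      exact ((hk _ le_rfl).inv).mul continuousOn_snd
    · simp only [K, if_true, Bool.false_eq_true, if_false, inv_one, one_mul]
      exact ((hk _ (by rw [Set.inter_comm]))).mul continuousOn_snd
    · simp; fun_prop
  coordChange_comp := by
    intro i j k x _ v
    group

lemma cov : IsCoveringMap (core I).proj :=
  FiberBundle.isCoveringMap (F := FreeGroup I) (E := (core I).Fiber)

open Classical in
/-- The lift of an edge. -/
noncomputable def liftFun (i : I) (g : FreeGroup I) (t : unitInterval) : (core I).TotalSpace :=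
  ⟨edge i t, ((K ((core I).indexAt (edge i t)) (edge i t))⁻¹ *
    (if (t : ℝ) < 1/2 then g else FreeGroup.of i * g) : FreeGroup I)⟩

lemma continuous_liftFun (i : I) (g : FreeGroup I) : Continuous (liftFun i g) := by
  classical
  rw [continuous_iff_continuousAt]
  intro t
  rw [FiberBundle.continuousAt_totalSpace]
  refine ⟨(continuous_edge i).continuousAt, ?_⟩
  have e1 : ∀ s, ((trivializationAt (FreeGroup I) (core I).Fiber (liftFun i g t).proj)
      (liftFun i g s)).2 = (K ((core I).indexAt (edge i t)) (edge i s))⁻¹ *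
        (if (s : ℝ) < 1/2 then g else FreeGroup.of i * g) := by
    intro s
    change (K ((core I).indexAt (edge i t)) (edge i s))⁻¹ *
      K ((core I).indexAt (edge i s)) (edge i s) * ((K ((core I).indexAt (edge i s)) (edge i s))⁻¹ *
        (if (s : ℝ) < 1/2 then g else FreeGroup.of i * g)) = _
    group
  simp only [e1]
  by_cases ht : edge i t ∈ U0 I
  · have : (core I).indexAt (edge i t) = false := if_pos ht
    simp only [this, K, Bool.false_eq_true, if_false, inv_one, one_mul]
    rcases ht with h | h
    · refine (continuousAt_const (y := g)).congr ?_
      filter_upwards [(isOpen_lt (f := fun t : unitInterval => (t : ℝ)) (g := fun _ => 1/4)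
        (by fun_prop) (by fun_prop)).mem_nhds h] with s hs
      rw [if_pos (lt_trans hs (by norm_num))]
    · refine (continuousAt_const (y := FreeGroup.of i * g)).congr ?_
      filter_upwards [(isOpen_lt (g := fun t : unitInterval => (t : ℝ)) (f := fun _ => 3/4)
        (by fun_prop) (by fun_prop)).mem_nhds h] with s hs
      rw [if_neg (not_lt.2 (le_trans (by norm_num) (le_of_lt hs)))]
  · have : (core I).indexAt (edge i t) = true := if_neg ht
    simp only [this, K, if_true]
    refine (continuousAt_const (y := g)).congr ?_
    have h1 : edge i t ∈ U1 I := (mem_U0_or _).resolve_left ht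
    filter_upwards [(isOpen_U1.preimage (continuous_edge i)).mem_nhds h1] with s hs
    split_ifs with h
    · rw [k_edge_lt _ _ h]; simp
    · rw [k_edge_ge _ _ (not_lt.1 h) hs.2]; group

/-- Point in the fibre. -/
noncomputable def pt (g : FreeGroup I) : (core I).proj ⁻¹' {wedgeCirclesBase I} :=
  ⟨⟨wedgeCirclesBase I, g⟩, rfl⟩

lemma pt_injective : Function.Injective (pt (I := I)) := by
  intro g h hgh
  have := congrArg Subtype.val hgh
  simp only [pt] at this
  have h2 := Bundle.TotalSpace.mk.inj this
  exact eq_of_heq h2.2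

lemma total_ext {x y : WedgeCircles I} (h : x = y) (g : FreeGroup I) :
    (⟨x, g⟩ : (core I).TotalSpace) = ⟨y, g⟩ := by subst h; rfl

lemma liftFun_zero (i : I) (g : FreeGroup I) : liftFun i g 0 = (pt g).1 := by
  classical
  have : (core I).indexAt (edge i 0) = false := if_pos (by simp)
  simp only [liftFun, this, K]
  simp
  exact total_ext (edge_zero i) g

lemma liftFun_one (i : I) (g : FreeGroup I) : liftFun i g 1 = (pt (FreeGroup.of i * g)).1 := by
  classical
  have : (core I).indexAt (edge i 1) = false := if_pos (by simp only [edge_mem_U0]; right; norm_num)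
  simp only [liftFun, this, K, Bool.false_eq_true, if_false, inv_one, one_mul]
  rw [if_neg (by simp only [Set.Icc.coe_one]; norm_num)]
  exact total_ext (edge_one i) _

/-- class of the loop -/
def loopCl (i : I) : FundamentalGroup (WedgeCircles I) (wedgeCirclesBase I) :=
  Path.Homotopic.Quotient.mk (loop i)

/-- the homomorphism -/
noncomputable def phi (I : Type u) [TopologicalSpace I] [DiscreteTopology I] :
    FreeGroup I →* FundamentalGroup (WedgeCircles I) (wedgeCirclesBase I) :=
  FreeGroup.lift loopCl

lemma monodromy_loop (i : I) (g : FreeGroup I) :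
    cov.monodromyPerm _ (loopCl i) (pt g) = pt (FreeGroup.of i * g) := by
  change cov.monodromy (loopCl i : Path.Homotopic.Quotient _ _) (pt g) = _
  refine cov.monodromy_eq_of_map_eq (.mk ⟨⟨liftFun i g, continuous_liftFun i g⟩,
    liftFun_zero i g, liftFun_one i g⟩) ?_
  rfl

lemma monodromy_phi (w g : FreeGroup I) :
    cov.monodromyPerm _ (phi I w) (pt g) = pt (w * g) := by
  induction w using FreeGroup.induction_on generalizing g with
  | C1 => rw [map_one, map_one, one_mul]; rfl
  | of i => simp [phi, monodromy_loop]
  | inv_of i _ =>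
    rw [map_inv, map_inv, Equiv.Perm.inv_eq_iff_eq]
    simp [phi, monodromy_loop]
  | mul x y hx hy => rw [map_mul, map_mul, Equiv.Perm.mul_apply, hy, hx, mul_assoc]

lemma phi_injective : Function.Injective (phi I) := by
  intro a b h
  have := monodromy_phi a 1
  rw [h, monodromy_phi b 1] at this
  simpa using (pt_injective this).symm


/-! ### Surjectivity -/

open Path.Homotopic (Quotient)

instance : ContractibleSpace unitInterval :=
  (convex_Icc (0 : ℝ) 1).contractibleSpace ⟨0, by simp⟩

/-- segment in the unit interval -/
noncomputable def seg (a b : unitInterval) : Path a b where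
  toFun := Set.Icc.convexComb a b
  source' := by simp
  target' := by simp

/-- Classes generated by paths in edges. -/
inductive Good : ∀ {x y : WedgeCircles I}, Path.Homotopic.Quotient x y → Prop
  | edge (i : I) {a b : unitInterval} (σ : Path a b) :
      Good (Path.Homotopic.Quotient.mk (σ.map (continuous_edge i)))
  | refl (x : WedgeCircles I) : Good (Path.Homotopic.Quotient.refl x)
  | trans {x y z : WedgeCircles I} (p : Path.Homotopic.Quotient x y)
      (q : Path.Homotopic.Quotient y z) : Good p → Good q → Good (p.trans q)

lemma Good.symm {x y : WedgeCircles I} {p : Path.Homotopic.Quotient x y} (h : Good p) :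
    Good p.symm := by
  induction h with
  | edge i σ => exact Good.edge i σ.symm
  | refl x => 
    rw [← Path.Homotopic.Quotient.mk_refl, ← Path.Homotopic.Quotient.mk_symm, Path.refl_symm]
    exact Good.refl x
  | trans p q _ _ hp hq =>
    have : (p.trans q).symm = q.symm.trans p.symm := by
      induction p using Path.Homotopic.Quotient.ind
      induction q using Path.Homotopic.Quotient.ind
      rw [← Path.Homotopic.Quotient.mk_trans, ← Path.Homotopic.Quotient.mk_symm, Path.trans_symm]
      rfl
    rw [this]
    exact Good.trans _ _ hq hp

lemma Good.of_trans {x y z : WedgeCircles I} {p : Path.Homotopic.Quotient x y}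
    {q : Path.Homotopic.Quotient y z} (h : Good (p.trans q)) (hq : Good q) : Good p := by
  have := Good.trans _ _ h hq.symm
  rwa [Path.Homotopic.Quotient.trans_assoc, Path.Homotopic.Quotient.trans_symm,
    Path.Homotopic.Quotient.trans_refl] at this

lemma good_edge {x y : WedgeCircles I} (γ : Path x y) (i : I) (σ : unitInterval → unitInterval)
    (hσ : Continuous σ) (h : ∀ t, γ t = edge i (σ t)) : Good (Path.Homotopic.Quotient.mk γ) := by
  have h0 := h 0
  have h1 := h 1
  rw [γ.source] at h0
  rw [γ.target] at h1
  subst h0 h1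
  have : γ = (⟨⟨σ, hσ⟩, rfl, rfl⟩ : Path (σ 0) (σ 1)).map (continuous_edge i) := by
    ext t; exact h t
  rw [this]
  exact Good.edge i _

lemma good_const {x y z : WedgeCircles I} (γ : Path x y) (h : ∀ t, γ t = z) :
    Good (Path.Homotopic.Quotient.mk γ) := by
  have h0 := h 0
  have h1 := h 1
  rw [γ.source] at h0
  rw [γ.target] at h1
  subst h0 h1
  have : γ = Path.refl _ := by
    ext t; exact h t
  rw [this]
  exact Good.refl _

lemma good_cast {x y x' y' : WedgeCircles I} (γ : Path x y) (hx : x' = x) (hy : y' = y)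
    (h : Good (Path.Homotopic.Quotient.mk (γ.cast hx hy))) :
    Good (Path.Homotopic.Quotient.mk γ) := by
  subst hx hy; exact h

/-- open edge -/
def Ui (i : I) : Set (WedgeCircles I) :=
  {x | desc False (fun j t => j = i ∧ 0 < (t : ℝ) ∧ (t : ℝ) < 1) (by simp) (by simp) x}

lemma isOpen_Ui (i : I) : IsOpen (Ui i) := by
  rw [isOpen_iff]; intro j
  have : IsOpen ({_t : unitInterval | j = i} ∩
      ({t : unitInterval | 0 < (t : ℝ)} ∩ {t : unitInterval | (t : ℝ) < 1})) :=
    isOpen_const.inter ((isOpen_gtc _).inter (isOpen_ltc _))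
  exact this

open Classical in
/-- edge coordinate -/
noncomputable def coord : WedgeCircles I → unitInterval :=
  desc 0 (fun _ t => if t = 1 then 0 else t) (by simp) (by simp)

lemma coord_edge (i : I) (t : unitInterval) (h : (t : ℝ) < 1) : coord (edge i t) = t := by
  simp only [coord, desc_edge]
  rw [if_neg]
  rintro rfl
  simp at h

lemma continuousOn_coord (i : I) : ContinuousOn (coord (I := I)) (Ui i) := by
  rw [continuousOn_open_iff (isOpen_Ui i)]
  intro T hT
  rw [isOpen_iff]
  intro j
  have : {t : unitInterval | edge j t ∈ Ui i ∩ coord ⁻¹' T} =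
      {_t | j = i} ∩ ({t : unitInterval | 0 < (t : ℝ)} ∩ {t : unitInterval | (t : ℝ) < 1}) ∩ T := by
    ext t
    constructor
    · rintro ⟨⟨h, h0, h1⟩, ht⟩
      refine ⟨⟨h, h0, h1⟩, ?_⟩
      rwa [Set.mem_preimage, coord_edge _ _ h1] at ht
    · rintro ⟨⟨h, h0, h1⟩, ht⟩
      refine ⟨⟨h, h0, h1⟩, ?_⟩
      rwa [Set.mem_preimage, coord_edge _ _ h1]
  rw [this]
  exact (isOpen_const.inter ((isOpen_gtc _).inter (isOpen_ltc _))).inter hT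

lemma eq_of_mem_Ui (i : I) (x : WedgeCircles I) (h : x ∈ Ui i) : x = edge i (coord x) := by
  rcases cases x with rfl | ⟨j, t, h0, h1, rfl⟩
  · exact h.elim
  · rw [coord_edge _ _ h1]
    have : j = i := h.1
    rw [this]

lemma good_of_Ui {x y : WedgeCircles I} (γ : Path x y) (i : I) (h : ∀ t, γ t ∈ Ui i) :
    Good (Path.Homotopic.Quotient.mk γ) :=
  good_edge γ i (fun t => coord (γ t)) ((continuousOn_coord i).comp_continuous γ.continuous h)
    (fun t => eq_of_mem_Ui i _ (h t))

/-- expanding map of the interval -/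
noncomputable def expand (s : unitInterval) : unitInterval :=
  Set.projIcc 0 1 zero_le_one (2 * (s : ℝ) - 1/2)

lemma continuous_expand : Continuous expand := by
  unfold expand
  exact continuous_projIcc.comp (by fun_prop)

lemma expand_of_lt (s : unitInterval) (h : (s : ℝ) < 1/4) : expand s = 0 :=
  Set.projIcc_of_le_left _ (by linarith)

lemma expand_of_gt (s : unitInterval) (h : 3/4 < (s : ℝ)) : expand s = 1 :=
  Set.projIcc_of_right_le _ (by linarith)

lemma continuous_expandHom :
    Continuous fun p : unitInterval × unitInterval => Set.Icc.convexComb p.1 (expand p.1) p.2 :=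
  Set.Icc.continuous_convexComb_prod.comp
    (continuous_fst.prodMk ((continuous_expand.comp continuous_fst).prodMk continuous_snd))

/-- The homotopy on one edge. -/
noncomputable def edgeHom (i : I) : C(unitInterval, C(unitInterval, WedgeCircles I)) :=
  ContinuousMap.curry ⟨fun p => edge i (Set.Icc.convexComb p.1 (expand p.1) p.2),
    (continuous_edge i).comp continuous_expandHom⟩

lemma edgeHom_apply (i : I) (s t : unitInterval) :
    edgeHom i s t = edge i (Set.Icc.convexComb s (expand s) t) := rfl

lemma convexComb_self' (s t : unitInterval) : Set.Icc.convexComb s s t = s := by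
  simp

/-- The homotopy, curried. -/
noncomputable def hom : WedgeCircles I → C(unitInterval, WedgeCircles I) :=
  desc (ContinuousMap.const _ (wedgeCirclesBase I)) (fun i s => edgeHom i s)
    (by
      intro i; ext t
      rw [edgeHom_apply, expand_of_lt 0 (by simp), convexComb_self', edge_zero]; rfl)
    (by
      intro i; ext t
      rw [edgeHom_apply, expand_of_gt 1 (by simp only [Set.Icc.coe_one]; norm_num),
        convexComb_self', edge_one]; rfl)

lemma continuous_hom : Continuous (hom (I := I)) :=
  continuous_desc _ _ _ _ fun i => (edgeHom i).continuous

lemma hom_base (t : unitInterval) : hom (wedgeCirclesBase I) t = wedgeCirclesBase I := rfl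

lemma hom_edge (i : I) (s t : unitInterval) :
    hom (edge i s) t = edge i (Set.Icc.convexComb s (expand s) t) := rfl

/-- The end of the homotopy. -/
noncomputable def H1 : C(WedgeCircles I, WedgeCircles I) :=
  ⟨fun x => hom x 1, by have := continuous_hom (I := I); fun_prop⟩

/-- The homotopy. -/
noncomputable def homotopy : (ContinuousMap.id (WedgeCircles I)).Homotopy H1 where
  toFun p := hom p.2 p.1
  continuous_toFun := by have := continuous_hom (I := I); fun_prop
  map_zero_left x := by
    rcases cases x with rfl | ⟨j, t, h0, h1, rfl⟩
    · rfl
    · simp [hom_edge]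
  map_one_left x := rfl

lemma H1_of_mem (x : WedgeCircles I) (h : x ∈ U0 I) : H1 x = wedgeCirclesBase I := by
  rcases cases x with rfl | ⟨j, t, h0, h1, rfl⟩
  · rfl
  · change hom (edge j t) 1 = _
    rw [hom_edge, Set.Icc.convexComb_one]
    rcases h with h | h
    · rw [expand_of_lt _ h, edge_zero]
    · rw [expand_of_gt _ h, edge_one]

lemma good_evalAt (x : WedgeCircles I) :
    Good (Path.Homotopic.Quotient.mk (homotopy.evalAt x)) := by
  rcases cases x with rfl | ⟨j, s, h0, h1, rfl⟩
  · exact good_const _ (z := wedgeCirclesBase I) (fun t => rfl)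
  · exact good_edge _ j (fun t => Set.Icc.convexComb s (expand s) t) (by fun_prop) (fun t => rfl)

lemma good_of_U0 {x y : WedgeCircles I} (γ : Path x y) (h : ∀ t, γ t ∈ U0 I) :
    Good (Path.Homotopic.Quotient.mk γ) := by
  have h1 := Path.Homotopic.Quotient.eq.2 (Path.Homotopic.map_trans_evalAt homotopy γ)
  rw [Path.Homotopic.Quotient.mk_trans, Path.Homotopic.Quotient.mk_trans] at h1
  have h2 : Good (Path.Homotopic.Quotient.mk (γ.map (map_continuous H1))) :=
    good_const _ (z := wedgeCirclesBase I) (fun t => H1_of_mem _ (h t))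
  have h3 := Good.trans _ _ (good_evalAt x) h2
  rw [← h1] at h3
  exact h3.of_trans (good_evalAt y)

lemma good_all {x y : WedgeCircles I} (γ : Path x y) : Good (Path.Homotopic.Quotient.mk γ) := by
  have key : ∀ t t' : unitInterval, Good (Path.Homotopic.Quotient.mk (γ.subpath t t')) := by
    refine PreconnectedSpace.induction₂' _ ?_ ⟨?_⟩
    · intro t
      have hU : ∀ U : Set (WedgeCircles I), IsOpen U → γ t ∈ U →
          ∀ᶠ t' in 𝓝 t, ∀ s, γ.subpath t t' s ∈ U := by
        intro U hUo htU
        have hc : Continuous fun p : unitInterval × unitInterval => γ.subpath t p.1 p.2 :=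
          γ.continuous.comp (Set.Icc.continuous_convexComb_prod.comp
            (continuous_const.prodMk (continuous_fst.prodMk continuous_snd)))
        have := isCompact_univ.eventually_forall_of_forall_eventually (x₀ := t)
          (K := (Set.univ : Set unitInterval)) (P := fun t' s => γ.subpath t t' s ∈ U) ?_
        · simpa using this
        · intro s _
          refine hc.continuousAt.eventually_mem (hUo.mem_nhds ?_)
          simpa using htU
      have hG : ∀ᶠ t' in 𝓝 t, Good (Path.Homotopic.Quotient.mk (γ.subpath t t')) := by
        rcases cases (γ t) with h | ⟨i, s, h0, h1, h⟩
        · filter_upwards [hU (U0 I) isOpen_U0 (by rw [h]; simp)] with t' ht'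
          exact good_of_U0 _ ht'
        · filter_upwards [hU (Ui i) (isOpen_Ui i) (by rw [h]; exact ⟨rfl, h0, h1⟩)] with t' ht'
          exact good_of_Ui _ i ht'
      filter_upwards [hG] with t' ht'
      refine ⟨ht', ?_⟩
      rw [← Path.symm_subpath]
      exact ht'.symm
    · intro a b c hab hbc
      have := Path.Homotopic.Quotient.eq.2 ⟨Path.Homotopy.subpathTransSubpath γ a b c⟩
      rw [← this]
      exact Good.trans _ _ hab hbc
  have h := key 0 1
  rw [Path.subpath_zero_one] at h
  exact good_cast _ _ _ h

/-- Path from the base point along an edge. -/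
noncomputable def bp (i : I) (a : unitInterval) :
    Path.Homotopic.Quotient (wedgeCirclesBase I) (edge i a) :=
  .mk (((seg 0 a).map (continuous_edge i)).cast (edge_zero i).symm rfl)

lemma bp_trans (i : I) {a b : unitInterval} (σ : Path a b) :
    (bp i a).trans (.mk (σ.map (continuous_edge i))) = bp i b := by
  have h : ((((seg 0 a).map (continuous_edge i)).cast (edge_zero i).symm rfl).trans
      (σ.map (continuous_edge i))) =
      (((seg 0 a).trans σ).map (continuous_edge i)).cast (edge_zero i).symm rfl := by
    rw [Path.map_trans]; rfl
  rw [bp, bp, ← Path.Homotopic.Quotient.mk_trans, h, Path.Homotopic.Quotient.eq]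
  exact ((SimplyConnectedSpace.paths_homotopic ((seg 0 a).trans σ) (seg 0 b)).map
    (edgeC i)).pathCast _ _

lemma bp_zero (i : I) : bp i 0 = (Path.Homotopic.Quotient.refl _).cast rfl (edge_zero i) := by
  rw [← Path.Homotopic.Quotient.mk_refl, ← Path.Homotopic.Quotient.mk_cast, bp]
  congr 1
  ext t
  change edge i (Set.Icc.convexComb 0 0 t) = wedgeCirclesBase I
  rw [convexComb_self', edge_zero]

lemma bp_one (i : I) :
    bp i 1 = Path.Homotopic.Quotient.cast (loopCl i) rfl (edge_one i) := by
  rw [loopCl, ← Path.Homotopic.Quotient.mk_cast, bp]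
  congr 1
  ext t
  change edge i (Set.Icc.convexComb 0 1 t) = edge i t
  congr 1
  ext
  simp

lemma trans_cast {x y z z' : WedgeCircles I} (p : Path.Homotopic.Quotient x y)
    (q : Path.Homotopic.Quotient y z) (h : z' = z) :
    p.trans (q.cast rfl h) = (p.trans q).cast rfl h := by
  subst h; simp

/-- The element of the fundamental group, as path class. -/
noncomputable def ph (w : FreeGroup I) :
    Path.Homotopic.Quotient (wedgeCirclesBase I) (wedgeCirclesBase I) := phi I w

lemma ph_one : ph (1 : FreeGroup I) = .refl _ := map_one (phi I)

lemma ph_trans_loop (w : FreeGroup I) (i : I) :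
    (ph w).trans (loopCl i) = ph (FreeGroup.of i * w) := by
  have : phi I (FreeGroup.of i * w) = loopCl i * phi I w := by
    rw [map_mul]; simp [phi]
  exact this.symm

lemma ph_bp_zero (w : FreeGroup I) (i : I) :
    (ph w).trans (bp i 0) = (ph w).cast rfl (edge_zero i) := by
  rw [bp_zero, trans_cast, Path.Homotopic.Quotient.trans_refl]

lemma ph_bp_one (w : FreeGroup I) (i : I) :
    (ph w).trans (bp i 1) = (ph (FreeGroup.of i * w)).cast rfl (edge_one i) := by
  rw [bp_one, trans_cast, ph_trans_loop]

/-- Path classes in normal form. -/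
inductive NF : ∀ {x : WedgeCircles I}, Path.Homotopic.Quotient (wedgeCirclesBase I) x → Prop
  | base (w : FreeGroup I) : NF (ph w)
  | edge (w : FreeGroup I) (i : I) (a : unitInterval) (h0 : 0 < (a : ℝ)) (h1 : (a : ℝ) < 1) :
      NF ((ph w).trans (bp i a))

lemma NF.cast {x y : WedgeCircles I} {p : Path.Homotopic.Quotient (wedgeCirclesBase I) x}
    (h : NF p) (e : y = x) : NF (p.cast rfl e) := by
  subst e; simpa using h

lemma zero_or (a : unitInterval) : a = 0 ∨ a = 1 ∨ (0 < (a : ℝ) ∧ (a : ℝ) < 1) := by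
  by_cases h0 : a = 0
  · exact Or.inl h0
  by_cases h1 : a = 1
  · exact Or.inr (Or.inl h1)
  refine Or.inr (Or.inr ⟨?_, ?_⟩)
  · exact lt_of_le_of_ne a.2.1 (fun h => h0 (Subtype.ext h.symm))
  · exact lt_of_le_of_ne a.2.2 (fun h => h1 (Subtype.ext h))

lemma NF_bp (w : FreeGroup I) (i : I) (a : unitInterval) : NF ((ph w).trans (bp i a)) := by
  rcases zero_or a with rfl | rfl | ⟨h0, h1⟩
  · rw [ph_bp_zero]; exact (NF.base w).cast _
  · rw [ph_bp_one]; exact (NF.base _).cast _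
  · exact NF.edge w i a h0 h1

lemma edge_inj {i j : I} {a b : unitInterval} (h0 : 0 < (a : ℝ)) (h1 : (a : ℝ) < 1)
    (h : edge i a = edge j b) : i = j ∧ a = b := by
  rcases Quotient.exact (s := wedgeCirclesSetoid I) h with h | ⟨h, _⟩
  · have := Sum.inl.inj h
    exact ⟨congrArg Prod.fst this, congrArg Prod.snd this⟩
  · rcases h with h | h
    · simp only [] at h; subst h; simp at h0
    · simp only [] at h; subst h; simp at h1

lemma edge_ne_base {i : I} {a : unitInterval} (h0 : 0 < (a : ℝ)) (h1 : (a : ℝ) < 1) :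
    edge i a ≠ wedgeCirclesBase I := by
  intro h
  have : edge i a ∈ U1 I := ⟨h0, h1⟩
  rw [h] at this
  exact this

lemma NF_inv_edge {x : WedgeCircles I} {p : Path.Homotopic.Quotient (wedgeCirclesBase I) x}
    (hp : NF p) (i : I) (a : unitInterval) (h : edge i a = x) :
    ∃ w, p.cast rfl h = (ph w).trans (bp i a) := by
  cases hp with
  | base w =>
    rcases zero_or a with rfl | rfl | ⟨h0, h1⟩
    · exact ⟨w, (ph_bp_zero w i).symm⟩
    · refine ⟨(FreeGroup.of i)⁻¹ * w, ?_⟩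
      rw [ph_bp_one, mul_inv_cancel_left]
    · exact (edge_ne_base h0 h1 h).elim
  | edge w j b h0 h1 =>
    obtain ⟨rfl, rfl⟩ := edge_inj h0 h1 h.symm
    exact ⟨w, by simp⟩

lemma NF_inv_base {x : WedgeCircles I} {p : Path.Homotopic.Quotient (wedgeCirclesBase I) x}
    (hp : NF p) (h : wedgeCirclesBase I = x) : ∃ w, p.cast rfl h = ph w := by
  cases hp with
  | base w => exact ⟨w, by simp⟩
  | edge w j b h0 h1 => exact (edge_ne_base h0 h1 h.symm).elim

lemma NF_trans {x y : WedgeCircles I} {q : Path.Homotopic.Quotient x y} (hq : Good q)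
    (p : Path.Homotopic.Quotient (wedgeCirclesBase I) x) (hp : NF p) : NF (p.trans q) := by
  induction hq with
  | edge i σ =>
    obtain ⟨w, hw⟩ := NF_inv_edge hp i _ rfl
    rw [Path.Homotopic.Quotient.cast_rfl_rfl] at hw
    rw [hw, Path.Homotopic.Quotient.trans_assoc, bp_trans]
    exact NF_bp _ _ _
  | refl x => rwa [Path.Homotopic.Quotient.trans_refl]
  | trans q r _ _ hq hr =>
    rw [← Path.Homotopic.Quotient.trans_assoc]
    exact hr _ (hq _ hp)

lemma phi_surjective : Function.Surjective (phi I) := by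
  intro q
  change Path.Homotopic.Quotient (wedgeCirclesBase I) (wedgeCirclesBase I) at q
  have hq : Good q := by
    induction q using Path.Homotopic.Quotient.ind with
    | mk γ => exact good_all γ
  have h := NF_trans hq _ (NF.base 1)
  rw [ph_one, Path.Homotopic.Quotient.refl_trans] at h
  obtain ⟨w, hw⟩ := NF_inv_base h rfl
  rw [Path.Homotopic.Quotient.cast_rfl_rfl] at hw
  exact ⟨w, hw.symm⟩

end WC

/-- The fundamental group of the wedge of circles indexed by `I` (the realization of
the `Top`-graph with a single vertex and discrete edge space `I`) is isomorphic as a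
group to the free group on `I`. -/
theorem fundamentalGroup_wedgeCircles (I : Type u) [TopologicalSpace I]
    [DiscreteTopology I] :
    Nonempty (FundamentalGroup (WedgeCircles I) (wedgeCirclesBase I) ≃* FreeGroup I) :=
  ⟨(MulEquiv.ofBijective (WC.phi I) ⟨WC.phi_injective, WC.phi_surjective⟩).symm⟩
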